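/- arXiv:math/0308037 — 2 statements merged into one kernel-verified Lean document; each statement's English description precedes it below -/
import Mathlib

section
/- Let C be a k-linear abelian category over a field k, with enough injectives. Let M be an object with local endomorphism ring, and let N be an object such that there is a natural isomorphism of functors Hom(M, −)* ≅ Ext^d(−, N) for some d ≥ 1, where (−)* denotes k-linear dualization. Then there exists a short exact sequence 0 → Σ^{d−1}N → B —p→ M → 0 in which p is right almost split, where Σ^{d−1}N denotes the (d−1)'st syzygy in an injective resolution of N. -/
/-!
Write `E = End M`. Since `E` is local, its nonunits form a proper `k`-subspace, so there is a
functional `φ : E → k` with `φ(1) ≠ 0` which kills all nonunits. Let `ε ∈ Extᵈ(M, N)` be the class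
corresponding to `φ`. For `t : X ⟶ M`, naturality says that the pulled back class `t^*ε`
corresponds to the functional `f ↦ φ(f ≫ t)` on `Hom(M, X)`. If `t` is not a split epimorphism, then
`f ≫ t` is never invertible, so this functional vanishes and `t^*ε = 0`; while `ε ≠ 0` as
`φ(1) ≠ 0`.

Dimension shifting (`exists_cosyzygy`) identifies `Extᵈ(-, N)` with `Ext¹(-, Σ^{d-1}N)`, turning `ε`
into a class `η ∈ Ext¹(M, Σ^{d-1}N)`. It is realized (`exists_shortExact_of_ext_one`) by a short
exact sequence `0 → Σ^{d-1}N → B → M → 0` such that `t : X ⟶ M` factors through `p : B ⟶ M` if and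
only if `t^*η = 0`. By the previous paragraph, `p` is right almost split.
-/

open CategoryTheory CategoryTheory.Limits

universe w v u

/-- `p : B ⟶ M` is right almost split: it is not a split epimorphism and every morphism
`X ⟶ M` which is not a split epimorphism factors through `p`. -/
def IsRightAlmostSplit {C : Type u} [Category.{v} C] {B M : C} (p : B ⟶ M) : Prop :=
  (¬ ∃ s : M ⟶ B, s ≫ p = 𝟙 M) ∧
    ∀ ⦃X : C⦄ (t : X ⟶ M), (¬ ∃ s : M ⟶ X, s ≫ t = 𝟙 M) → ∃ u : X ⟶ B, u ≫ p = t

/-- `IsCosyzygy n N K` says that `K` is an `n`-th cosyzygy of `N`: there is a chain of `n`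
short exact sequences `0 → N → I⁰ → Σ¹N → 0`, …, with the middle terms injective, ending
at `K ≅ ΣⁿN`. -/
def IsCosyzygy {C : Type u} [Category.{v} C] [Abelian C] : ℕ → C → C → Prop
  | 0, N, K => Nonempty (N ≅ K)
  | n + 1, N, K => ∃ (I S' : C) (f : N ⟶ I) (g : I ⟶ S') (w : f ≫ g = 0),
      Injective I ∧ (ShortComplex.mk f g w).ShortExact ∧ IsCosyzygy n S' K

open Abelian in
/-- Dimension shifting: `Ext¹(-, ΣᵐN) ≅ Ext^{m+1}(-, N)`, given by Yoneda product with a class `α`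
in `Extᵐ(ΣᵐN, N)`. -/
lemma exists_cosyzygy {C : Type u} [Category.{v} C] [Abelian C] [EnoughInjectives C]
    [HasExt.{w} C] (m : ℕ) (N : C) :
    ∃ (A : C) (α : Ext.{w} A N m), IsCosyzygy m N A ∧
      ∀ X : C, Function.Bijective (fun x : Ext.{w} X A 1 => x.comp α (add_comm 1 m)) := by
  induction m generalizing N with
  | zero =>
    refine ⟨N, Ext.mk₀ (𝟙 N), ⟨Iso.refl N⟩, fun X => ?_⟩
    convert Function.bijective_id using 1
    funext x
    exact Ext.comp_mk₀_id x
  | succ m ih =>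
    let S : ShortComplex C := ShortComplex.mk _ _ (cokernel.condition (Injective.ι N))
    have hS : S.ShortExact := { exact := ShortComplex.exact_cokernel _ }
    have : Injective S.X₂ := inferInstanceAs (Injective (Injective.under N))
    obtain ⟨A, α, hA, hα⟩ := ih S.X₃
    refine ⟨A, α.comp hS.extClass rfl,
      ⟨S.X₂, S.X₃, S.f, S.g, S.zero, inferInstance, hS, hA⟩, fun X => ?_⟩
    have hδ : Function.Bijective
        (fun y : Ext.{w} X S.X₃ (m + 1) => y.comp hS.extClass (rfl : m + 1 + 1 = m + 2)) := by
      constructor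
      · intro y y' h
        have h0 : (y - y').comp hS.extClass (rfl : m + 1 + 1 = m + 2) = 0 := by
          rw [sub_eq_add_neg, Ext.add_comp, Ext.neg_comp, ← sub_eq_add_neg]
          exact sub_eq_zero.2 h
        obtain ⟨z, hz⟩ := Ext.covariant_sequence_exact₃ X hS _ _ h0
        rw [Ext.eq_zero_of_injective z, Ext.zero_comp] at hz
        exact sub_eq_zero.1 hz.symm
      · intro y
        exact Ext.covariant_sequence_exact₁ X hS y (Ext.eq_zero_of_injective _) rfl
    convert hδ.comp (hα X) using 1
    funext x
    exact (Ext.comp_assoc x α hS.extClass _ _ (by lia)).symm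

/-- The pullback of a short exact sequence along a morphism to its third term. -/
lemma shortExact_pullback {C : Type u} [Category.{v} C] [Abelian C] {S : ShortComplex C}
    (hS : S.ShortExact) {M : C} (g : M ⟶ S.X₃) :
    ∃ (i : S.X₁ ⟶ pullback S.g g) (w : i ≫ pullback.snd S.g g = 0),
      (ShortComplex.mk i (pullback.snd S.g g) w).ShortExact := by
  have := hS.mono_f
  have := hS.epi_g
  obtain ⟨i, hi₁, hi₂⟩ : ∃ i : S.X₁ ⟶ pullback S.g g,
      i ≫ pullback.fst S.g g = S.f ∧ i ≫ pullback.snd S.g g = 0 :=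
    ⟨pullback.lift S.f 0 (by simp), pullback.lift_fst _ _ _, pullback.lift_snd _ _ _⟩
  have hm : Mono i := mono_of_mono_fac hi₁
  refine ⟨i, hi₂, ?_⟩
  have hex : (ShortComplex.mk _ _ hi₂).Exact := by
    refine ShortComplex.exact_of_f_is_kernel _ (KernelFork.IsLimit.ofι' _ _ fun {Z} z hz => ?_)
    dsimp at z hz
    have hz' : (z ≫ pullback.fst S.g g) ≫ S.g = 0 := by
      rw [Category.assoc, pullback.condition, reassoc_of% hz, zero_comp]
    refine ⟨hS.exact.lift _ hz', pullback.hom_ext ?_ ?_⟩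
    · exact (Category.assoc _ _ _).trans (by rw [hi₁, hS.exact.lift_f])
    · exact (Category.assoc _ _ _).trans (by rw [hi₂, hz, comp_zero])
  exact { exact := hex, mono_f := hm, epi_g := inferInstanceAs (Epi (pullback.snd S.g g)) }

open Abelian in
/-- A class `η` in `Ext¹(M, A)` is realized by a short exact sequence `0 → A → B → M → 0` such that
the morphisms to `M` which lift to `B` are those along which `η` pulls back to zero. -/
lemma exists_shortExact_of_ext_one {C : Type u} [Category.{v} C] [Abelian C]
    [EnoughInjectives C] [HasExt.{w} C] {M A : C} (η : Ext.{w} M A 1) :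
    ∃ (B : C) (i : A ⟶ B) (p : B ⟶ M) (w : i ≫ p = 0), (ShortComplex.mk i p w).ShortExact ∧
      ∀ ⦃X : C⦄ (t : X ⟶ M), (∃ u : X ⟶ B, u ≫ p = t) ↔
        (Ext.mk₀ t).comp η (zero_add 1) = 0 := by
  let S : ShortComplex C := ShortComplex.mk _ _ (cokernel.condition (Injective.ι A))
  have hS : S.ShortExact := { exact := ShortComplex.exact_cokernel _ }
  have : Injective S.X₂ := inferInstanceAs (Injective (Injective.under A))
  -- As `Ext¹(M, S.X₂) = 0`, the class `η` is the image of some `g : M ⟶ S.X₃` under the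
  -- connecting map; the sequence is the pullback of `S` along `g`.
  obtain ⟨y, hy⟩ := Ext.covariant_sequence_exact₁ M hS η (Ext.eq_zero_of_injective _) (zero_add 1)
  obtain ⟨g, rfl⟩ := Ext.homEquiv₀.symm.surjective y
  obtain ⟨i, w, hw⟩ := shortExact_pullback hS g
  refine ⟨_, i, _, w, hw, fun X t => ?_⟩
  have key : (Ext.mk₀ t).comp η (zero_add 1) =
      (Ext.mk₀ (t ≫ g)).comp hS.extClass (zero_add 1) := by
    rw [← hy, ← Ext.mk₀_comp_mk₀, Ext.comp_assoc_of_second_deg_zero]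
    rfl
  rw [key]
  constructor
  · rintro ⟨u, rfl⟩
    rw [Category.assoc, ← pullback.condition, ← Category.assoc, ← Ext.mk₀_comp_mk₀,
      Ext.comp_assoc_of_second_deg_zero, hS.comp_extClass, Ext.comp_zero]
  · intro h
    obtain ⟨z, hz⟩ := Ext.covariant_sequence_exact₃ X hS _ _ h
    obtain ⟨z, rfl⟩ := Ext.homEquiv₀.symm.surjective z
    have hz' : z ≫ S.g = t ≫ g := by
      apply Ext.homEquiv₀.symm.injective
      refine Eq.trans ?_ hz
      exact (Ext.mk₀_comp_mk₀ z S.g).symm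
    exact ⟨pullback.lift z t hz', pullback.lift_snd _ _ _⟩

/-- If `End M` is local, some functional on it kills all nonunits but not the identity. -/
lemma exists_functional (k : Type) [Field k] {C : Type u} [Category.{v} C] [Abelian C]
    [CategoryTheory.Linear k C] (M : C) (hM : IsLocalRing (End M)) :
    ∃ φ : (M ⟶ M) →ₗ[k] k, φ (𝟙 M) ≠ 0 ∧ ∀ f : M ⟶ M, ¬ IsIso f → φ f = 0 := by
  let P : Submodule k (End M) :=
    { carrier := nonunits (End M)
      zero_mem' := zero_mem_nonunits.2 zero_ne_one
      add_mem' := IsLocalRing.nonunits_add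
      smul_mem' := fun c f hf h => hf (by
        have hc : c ≠ 0 := by
          rintro rfl
          rw [zero_smul] at h
          exact not_isUnit_zero h
        have := h.smul (Units.mk0 c hc)⁻¹
        rwa [Units.smul_def, Units.val_inv_eq_inv_val, Units.val_mk0, smul_smul,
          inv_mul_cancel₀ hc, one_smul] at this) }
  have h1 : (1 : End M) ∉ P := fun h => h isUnit_one
  obtain ⟨φ, hφ, hP⟩ := Submodule.exists_le_ker_of_notMem h1
  refine ⟨φ, hφ, fun f hf => ?_⟩
  have : (f : End M) ∈ P := fun h => hf ((isUnit_iff_isIso f).1 h)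
  exact hP this

/-- Let `C` be a `k`-linear abelian category with enough injectives over a
field `k`, let `M` be an object with local endomorphism ring, and let `N` be an object with
a natural isomorphism `Hom(M, −)* ≅ Extᵈ(−, N)` for some `d ≥ 1`.  Then there is a short
exact sequence `0 → Σ^{d−1}N → B →p M → 0` with `p` right almost split, where `Σ^{d−1}N` is
the `(d−1)`-st cosyzygy of an injective resolution of `N`. -/
theorem stmt3 (k : Type) [Field k] {C : Type u} [Category.{v} C] [Abelian C]
    [CategoryTheory.Linear k C] [EnoughInjectives C] [HasExt.{w} C]
    (M N : C) (hM : IsLocalRing (End M)) (d : ℕ) (hd : 1 ≤ d)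
    (e : ∀ X : C, ((M ⟶ X) →ₗ[k] k) ≃+ Abelian.Ext X N d)
    (he : ∀ ⦃X Y : C⦄ (t : X ⟶ Y) (φ : (M ⟶ Y) →ₗ[k] k),
      e X (φ ∘ₗ Linear.rightComp k M t) = (Abelian.Ext.mk₀ t).comp (e Y φ) (zero_add d)) :
    ∃ (A B : C) (i : A ⟶ B) (p : B ⟶ M) (w : i ≫ p = 0),
      IsCosyzygy (d - 1) N A ∧ (ShortComplex.mk i p w).ShortExact ∧
        IsRightAlmostSplit p := by
  obtain ⟨m, rfl⟩ : ∃ m, d = m + 1 := ⟨d - 1, by lia⟩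
  obtain ⟨φ, hφ1, hφ⟩ := exists_functional k M hM
  obtain ⟨A, α, hA, hα⟩ := exists_cosyzygy.{w} m N
  obtain ⟨η, hη⟩ := (hα M).2 (e M φ)
  obtain ⟨B, i, p, w, hS, hp⟩ := exists_shortExact_of_ext_one η
  -- A morphism `t` lifts to `B` if and only if the functional `f ↦ φ (f ≫ t)` vanishes.
  have key : ∀ ⦃X : C⦄ (t : X ⟶ M),
      (∃ u : X ⟶ B, u ≫ p = t) ↔ φ ∘ₗ Linear.rightComp k M t = 0 := by
    intro X t
    have h : ((Abelian.Ext.mk₀ t).comp η (zero_add 1)).comp α (add_comm 1 m) =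
        e X (φ ∘ₗ Linear.rightComp k M t) := by
      rw [he, ← hη]
      exact Abelian.Ext.comp_assoc _ _ _ _ _ (by lia)
    rw [hp, ← (e X).map_eq_zero_iff, ← h]
    constructor
    · intro h0
      rw [h0, Abelian.Ext.zero_comp]
    · intro h0
      exact (hα X).1 (h0.trans (Abelian.Ext.zero_comp _ _ _ _ _).symm)
  refine ⟨A, B, i, p, w, hA, hS, fun hs => hφ1 ?_, fun X t ht => (key t).2 ?_⟩
  · have := LinearMap.congr_fun ((key (𝟙 M)).1 hs) (𝟙 M)
    simpa using this
  · ext f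
    refine hφ (f ≫ t) fun hiso => ht ⟨inv (f ≫ t) ≫ f, ?_⟩
    rw [Category.assoc, IsIso.inv_hom_id]
end

section
/- In a Grothendieck abelian category (cocomplete abelian category with exact filtered colimits and a generator), every object has an injective envelope; in particular the category has enough injectives. -/
/-!
By Mathlib's `IsGrothendieckAbelian.enoughInjectives`, every `A` embeds in an injective `I`; an
injective envelope is then cut out inside `I`.

The one consequence of AB5 used below is `mono_of_chain`: a morphism out of the union of a chain of
subobjects is a monomorphism as soon as its restriction to each member is. It makes Zorn's lemma
applicable twice.

* Among the subobjects of `I` that are essential extensions of `A` there is a maximal one, `E`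
  (`exists_maximal_essential`).
* Among the subobjects of `I` meeting `E` trivially there is a maximal one, `F`. Then
  `E ⟶ I ⟶ I/F` is a monomorphism, and by maximality it is essential
  (`exists_essential_quotient`).

As `I` is injective, `E ⟶ I` extends along `E ⟶ I/F` to some `h : I/F ⟶ I`, which is a monomorphism
by essentiality. Its image is an essential extension of `A` containing `E`, hence equals `E`.
So `h` gives a map `I/F ⟶ E` exhibiting `E` as a retract of `I`, and `E` is injective.
-/

open CategoryTheory CategoryTheory.Limits

universe v u

namespace InjEnvelope

variable {C : Type u} [Category.{v} C]

/-- A morphism `f : A ⟶ E` is essential if `g` is a monomorphism whenever `f ≫ g` is one. For a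
monomorphism `f` in an abelian category, this says that each nonzero subobject of `E` meets the
image of `f` nontrivially. -/
def Ess {A E : C} (f : A ⟶ E) : Prop :=
  ∀ ⦃Y : C⦄ (g : E ⟶ Y), Mono (f ≫ g) → Mono g

lemma Ess.comp {A B D : C} {f : A ⟶ B} {g : B ⟶ D} (hf : Ess f) (hg : Ess g) :
    Ess (f ≫ g) := by
  intro Y k hk
  rw [Category.assoc] at hk
  exact hg _ (hf _ hk)

lemma ess_of_isIso {A B : C} (f : A ⟶ B) [IsIso f] : Ess f := by
  intro Y g hg
  have : g = inv f ≫ (f ≫ g) := by simp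
  rw [this]
  infer_instance

variable [Abelian C]

/-- If `a` is the kernel of `p`, `b` is a monomorphism killed by `q`, and `a ≫ q` is a
monomorphism, then the subobjects `a` and `b` meet trivially, so `b ≫ p` is a monomorphism. -/
lemma mono_swap {A B X Q R : C} {a : A ⟶ X} {b : B ⟶ X} {p : X ⟶ Q} {q : X ⟶ R}
    (w : a ≫ p = 0) (ha : IsLimit (KernelFork.ofι a w)) [Mono b] (hb : b ≫ q = 0)
    (h : Mono (a ≫ q)) : Mono (b ≫ p) := by
  refine Preadditive.mono_of_cancel_zero _ fun x hx => ?_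
  obtain ⟨y, hy⟩ := KernelFork.IsLimit.lift' ha (x ≫ b) (by simpa using hx)
  have hy : y ≫ a = x ≫ b := hy
  have h0 : y ≫ a ≫ q = 0 := by rw [reassoc_of% hy, hb, comp_zero]
  have y0 : y = 0 := (Preadditive.mono_iff_cancel_zero _).1 h _ _ h0
  rw [y0, zero_comp] at hy
  exact (Preadditive.mono_iff_cancel_zero b).1 inferInstance _ _ hy.symm

variable [IsGrothendieckAbelian.{v} C]

/-- The form of AB5 that is needed: a directed union of subobjects is their filtered colimit, and a
filtered colimit of monomorphisms is a monomorphism. -/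
lemma mono_of_directed {X Y : C} {J : Type v} [Preorder J] [IsDirectedOrder J] [Nonempty J]
    (V : J → Subobject X) (hV : Monotone V) (T : Subobject X) (hT : T = ⨆ j, V j)
    (hle : ∀ j, V j ≤ T) (g : (T : C) ⟶ Y) (hg : ∀ j, Mono ((V j).ofLE T (hle j) ≫ g)) :
    Mono g := by
  let F : J ⥤ MonoOver X := hV.functor ⋙ Subobject.representative
  let cc : Cocone (F ⋙ MonoOver.forget _) :=
    { pt := (Subobject.representative.obj T).obj
      ι := { app := fun j => (Subobject.representative.map (homOfLE (hle j))).hom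
             naturality := fun i j f => by
              refine Eq.trans ?_ (Category.comp_id _).symm
              exact congrArg InducedCategory.Hom.hom
                (Subobject.representative.map_comp (hV.functor.map f) (homOfLE (hle j))).symm } }
  have : Mono cc.pt.hom := inferInstanceAs (Mono T.arrow)
  have key : Subobject.mk cc.pt.hom = ⨆ j, Subobject.mk (F.obj j).obj.hom := by
    have h1 : Subobject.mk cc.pt.hom = T := Subobject.mk_arrow T
    have h2 (j : J) : Subobject.mk (F.obj j).obj.hom = V j := Subobject.mk_arrow (V j)
    rw [h1, hT]
    exact iSup_congr fun j => (h2 j).symm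
  have hcol := IsGrothendieckAbelian.isColimitMapCoconeOfSubobjectMkEqISup F cc key
  let α : F ⋙ MonoOver.forget _ ⋙ Over.forget _ ⟶ (Functor.const _).obj Y :=
    { app := fun j => (V j).ofLE T (hle j) ≫ g
      naturality := fun i j f => by
        have h := ((Over.forget X).mapCocone cc).w f
        refine Eq.trans ?_ (Category.comp_id _).symm
        exact (Category.assoc _ _ _).symm.trans (congrArg (· ≫ g) h) }
  have : ∀ j, Mono (α.app j) := hg
  have := NatTrans.mono_of_mono_app α
  have : IsConnected J := IsFiltered.isConnected J
  exact colim.map_mono' α hcol (isColimitConstCocone J Y) g (fun j => (Category.comp_id _).symm)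

/-- Special case of `mono_of_directed`, in the shape in which Zorn's lemma uses it. -/
lemma mono_of_chain {X Y : C} (c : Set (Subobject X)) (hc : IsChain (· ≤ ·) c)
    (hne : c.Nonempty) (g : ((sSup c : Subobject X) : C) ⟶ Y)
    (hg : ∀ (S : Subobject X) (hS : S ∈ c), Mono (S.ofLE (sSup c) (le_sSup hS) ≫ g)) :
    Mono g := by
  -- `mono_of_directed` needs an index set in `Type v`, whence the `Shrink`.
  let V : Shrink.{v} c → Subobject X := fun j => ((equivShrink c).symm j).1
  have hmem (j : Shrink.{v} c) : V j ∈ c := ((equivShrink c).symm j).2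
  let : Preorder (Shrink.{v} c) := Preorder.lift V
  have : Nonempty (Shrink.{v} c) := hne.to_subtype.map (equivShrink c)
  have : IsDirectedOrder (Shrink.{v} c) := ⟨fun a b => by
    rcases hc.total (hmem a) (hmem b) with h | h
    · exact ⟨b, h, le_refl (V b)⟩
    · exact ⟨a, le_refl (V a), h⟩⟩
  refine mono_of_directed V (fun _ _ h => h) (sSup c) (le_antisymm ?_ ?_)
    (fun j => le_sSup (hmem j)) g fun j => hg _ (hmem j)
  · refine sSup_le fun S hS => ?_
    refine le_trans (le_of_eq ?_) (le_iSup V (equivShrink c ⟨S, hS⟩))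
    simp [V]
  · exact iSup_le fun j => le_sSup (hmem j)

/-- Essential extensions of `A` inside `I` are closed under unions of chains, so a maximal one
exists. -/
lemma exists_maximal_essential {A I : C} (i : A ⟶ I) [Mono i] :
    ∃ E : Subobject I,
      Maximal (fun S : Subobject I => ∃ k : A ⟶ (S : C), k ≫ S.arrow = i ∧ Ess k) E := by
  obtain ⟨E, -, hE⟩ := zorn_le_nonempty₀
    {S : Subobject I | ∃ k : A ⟶ (S : C), k ≫ S.arrow = i ∧ Ess k} (by
    intro c hcs hc S₀ hS₀
    refine ⟨sSup c, ?_, fun S hS => le_sSup hS⟩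
    obtain ⟨k₀, hk₀, -⟩ := hcs hS₀
    refine ⟨k₀ ≫ S₀.ofLE _ (le_sSup hS₀), by simpa using hk₀, fun Y g hg => ?_⟩
    refine mono_of_chain c hc ⟨_, hS₀⟩ g fun S hS => ?_
    obtain ⟨k, hk, hess⟩ := hcs hS
    apply hess
    have : k ≫ S.ofLE _ (le_sSup hS) = k₀ ≫ S₀.ofLE _ (le_sSup hS₀) := by
      rw [← cancel_mono (sSup c : Subobject I).arrow]
      simp [hk, hk₀]
    rwa [← Category.assoc, this]) (Subobject.mk i)
    ⟨(Subobject.underlyingIso i).inv, by simp, ess_of_isIso _⟩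
  exact ⟨E, hE⟩

/-- A subobject `e` of `I` becomes an essential subobject of a suitable quotient of `I`, namely the
quotient by a maximal subobject meeting `e` trivially. -/
lemma exists_essential_quotient {E I : C} (e : E ⟶ I) [Mono e] :
    ∃ (Q : C) (p : I ⟶ Q), Mono (e ≫ p) ∧ Ess (e ≫ p) := by
  let π := cokernel.π e
  have he : IsLimit (KernelFork.ofι e (cokernel.condition e)) :=
    Abelian.monoIsKernelOfCokernel (CokernelCofork.ofπ _ (cokernel.condition _)) (cokernelIsCokernel e)
  -- `F` meets `e` trivially exactly when `F` maps monomorphically to `cokernel e`.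
  obtain ⟨F, -, hF⟩ := zorn_le_nonempty₀ {F : Subobject I | Mono (F.arrow ≫ π)} (by
    intro c hcs hc S₀ hS₀
    refine ⟨sSup c, mono_of_chain c hc ⟨_, hS₀⟩ _ fun S hS => ?_, fun S hS => le_sSup hS⟩
    have : Mono (S.arrow ≫ π) := hcs hS
    simpa using this) ⊥ (by
    refine Preadditive.mono_of_cancel_zero _ fun x _ => ?_
    rw [← cancel_mono (⊥ : Subobject I).arrow]
    simp)
  have hFk : IsLimit (KernelFork.ofι F.arrow (cokernel.condition F.arrow)) :=
    Abelian.monoIsKernelOfCokernel (CokernelCofork.ofπ _ (cokernel.condition _)) (cokernelIsCokernel F.arrow)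
  refine ⟨cokernel F.arrow, cokernel.π F.arrow,
    mono_swap _ hFk (cokernel.condition e) hF.prop, fun Y g hg => ?_⟩
  -- The kernel of `I ⟶ I/F ⟶ Y` contains `F` and meets `e` trivially, so it equals `F`.
  let q := cokernel.π F.arrow ≫ g
  have hq : Mono (e ≫ q) := by simpa [q] using hg
  have hK : Mono ((kernelSubobject q).arrow ≫ π) :=
    mono_swap _ he (kernelSubobject_arrow_comp q) hq
  have hle : F ≤ kernelSubobject q := le_kernelSubobject _ _ (by simp [q])
  have hge : kernelSubobject q ≤ F := hF.le_of_ge hK hle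
  refine Preadditive.mono_of_cancel_zero _ fun x hx => ?_
  -- `x` is tested after pulling back along the epimorphism `I ⟶ I/F`.
  have h1 : pullback.snd x (cokernel.π F.arrow) ≫ q = 0 := by
    rw [← Category.assoc, ← pullback.condition, Category.assoc, hx, comp_zero]
  have h2 : F.Factors (pullback.snd x (cokernel.π F.arrow)) :=
    Subobject.factors_of_le _ hge (kernelSubobject_factors _ _ h1)
  have h3 : pullback.fst x (cokernel.π F.arrow) ≫ x = 0 := by
    rw [pullback.condition, ← F.factorThru_arrow _ h2, Category.assoc, cokernel.condition,
      comp_zero]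
  exact (Preadditive.epi_iff_cancel_zero (pullback.fst x (cokernel.π F.arrow))).1
    inferInstance _ _ h3

lemma exists_envelope (A : C) : ∃ (E : C) (f : A ⟶ E), Injective E ∧ Mono f ∧ Ess f := by
  let i := Injective.ι A
  obtain ⟨E, hE⟩ := exists_maximal_essential i
  obtain ⟨k, hk, hess⟩ := hE.prop
  have hkm : Mono k := by
    have : Mono (k ≫ E.arrow) := by rw [hk]; infer_instance
    exact mono_of_mono k E.arrow
  obtain ⟨Q, p, hm, hpe⟩ := exists_essential_quotient E.arrow
  let h : Q ⟶ Injective.under A := Injective.factorThru E.arrow (E.arrow ≫ p)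
  have hh : (E.arrow ≫ p) ≫ h = E.arrow := Injective.comp_factorThru _ _
  have hhm : Mono h := hpe h (by rw [hh]; infer_instance)
  have hle : E ≤ Subobject.mk h := Subobject.le_mk_of_comm _ hh
  have hge : Subobject.mk h ≤ E := by
    refine hE.le_of_ge ⟨(k ≫ E.arrow ≫ p) ≫ (Subobject.underlyingIso h).inv, ?_,
      (hess.comp hpe).comp (ess_of_isIso _)⟩ hle
    have h' : E.arrow ≫ p ≫ h = E.arrow := by simpa using hh
    simp [h', hk]
  let r : Q ⟶ (E : C) := Subobject.ofMkLE h E hge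
  have hr : E.arrow ≫ p ≫ r = 𝟙 _ := by
    rw [← cancel_mono E.arrow]
    simpa [r] using hh
  have : Injective (E : C) := Retract.injective (Y := Injective.under A)
    { i := E.arrow, r := p ≫ r, retract := hr }
  exact ⟨E, k, this, hkm, hess⟩

end InjEnvelope

/-- In a Grothendieck abelian category (a cocomplete abelian category
with exact filtered colimits and a generator), every object `A` has an injective envelope,
i.e. an essential monomorphism `A ⟶ E` with `E` injective; in particular the category has
enough injectives. -/
theorem stmt16 {C : Type u} [Category.{v} C] [Abelian C] [HasColimits C] [AB5 C]
    (G : C) (hG : IsSeparator G) :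
    (∀ A : C, ∃ (E : C) (f : A ⟶ E), Injective E ∧ Mono f ∧
      ∀ ⦃Y : C⦄ (g : E ⟶ Y), Mono (f ≫ g) → Mono g) ∧
      EnoughInjectives C := by
  have : HasSeparator C := ⟨⟨G, hG⟩⟩
  have : IsGrothendieckAbelian.{v} C := {}
  exact ⟨InjEnvelope.exists_envelope, inferInstance⟩
end
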